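/- arXiv:2103.11493 — 2 statements merged into one kernel-verified Lean document; each statement's English description precedes it below -/
import Mathlib

section
/- Let d be a positive integer, let x_1, …, x_m ∈ [−1,1]^d be design points (with coordinates x_{ij}, j = 1,…,d), let n_1, …, n_m be positive integers with n = n_1 + ⋯ + n_m, let F_ξ = (1/n) Σ_{i=1}^m n_i δ_{x_i}, and let F_unif be the probability measure on [−1,1]^d with density 1/2^d with respect to Lebesgue measure. Then ∫∫ K_d(x,t) d(F_unif−F_ξ)(x) d(F_unif−F_ξ)(t) = (7/6)^d − (1/(2^{d−1} n)) Σ_{i=1}^m n_i ∏_{j=1}^d (2 + |x_{ij}| − x_{ij}²/2) + (1/n²) Σ_{i=1}^m Σ_{k=1}^m n_i n_k ∏_{j=1}^d (1 + (|x_{ij}| + |x_{kj}| − |x_{ij} − x_{kj}|)/2), where K_d(x,t) = ∏_{j=1}^d (1 + (|x_j| + |t_j| − |x_j − t_j|)/2). -/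
open MeasureTheory
open scoped ENNReal

open scoped NNReal

/-!
For a symmetric kernel the two cross terms of the discrepancy agree, and integration against a
discrete measure is a finite sum. When the kernel is a product over coordinates and the target is a
product measure, Fubini turns every remaining integral into a product of one-dimensional ones. For
the uniform distribution on `[-1,1]` these are `∫ k(a, t) dt / 2 = (2 + |a| - a² / 2) / 2`, whose
mean over `a` is `7 / 6`.
-/

/-- The squared discrepancy `∫∫ K d(μ - ν) d(μ - ν)` between two measures under a kernel `K`,
expanded bilinearly so that no signed measure is needed. -/
noncomputable def discrepancySq {α : Type*} [MeasurableSpace α] (K : α → α → ℝ)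
    (μ ν : Measure α) : ℝ :=
  (∫ a, ∫ t, K a t ∂μ ∂μ) - (∫ a, ∫ t, K a t ∂ν ∂μ) - (∫ a, ∫ t, K a t ∂μ ∂ν)
    + (∫ a, ∫ t, K a t ∂ν ∂ν)

/-- The discrete measure with mass `w i` at each point `x i`. The empirical measure `F_ξ` of an
exact design `ξ` with replication counts `n i` and `n = ∑ i, n i` has weights `w i = n i / n`. -/
noncomputable def discreteMeasure {α κ : Type*} [MeasurableSpace α] [Fintype κ]
    (x : κ → α) (w : κ → ℝ≥0) : Measure α :=
  ∑ i, (w i : ℝ≥0∞) • Measure.dirac (x i)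

section DiscreteMeasure

variable {α κ : Type*} [MeasurableSpace α] [Fintype κ]

lemma discreteMeasure_div_sum (x : κ → α) (r : κ → ℝ≥0) :
    discreteMeasure x (fun i => r i / ∑ k, r k)
      = ((∑ i, r i : ℝ≥0) : ℝ≥0∞)⁻¹ • discreteMeasure x r := by
  have hcoe (i : κ) :
      ((r i / ∑ k, r k : ℝ≥0) : ℝ≥0∞) = ((∑ k, r k : ℝ≥0) : ℝ≥0∞)⁻¹ * r i := by
    rcases eq_or_ne (r i) 0 with hi | hi
    · simp [hi]
    · have hsum : ∑ k, r k ≠ 0 := fun h => hi (Finset.sum_eq_zero_iff.1 h i (Finset.mem_univ i))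
      rw [ENNReal.coe_div hsum, ENNReal.div_eq_inv_mul]
  simp only [discreteMeasure, Finset.smul_sum, smul_smul, hcoe]

variable [MeasurableSingletonClass α]

lemma integral_discreteMeasure {E : Type*} [NormedAddCommGroup E] [NormedSpace ℝ E]
    [CompleteSpace E] (x : κ → α) (w : κ → ℝ≥0) (f : α → E) :
    ∫ a, f a ∂discreteMeasure x w = ∑ i, (w i : ℝ) • f (x i) := by
  rw [discreteMeasure, integral_finsetSum_measure fun i _ =>
    (integrable_dirac (by simp)).smul_measure ENNReal.coe_ne_top]
  simp only [integral_smul_measure, integral_dirac, ENNReal.coe_toReal]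

theorem discrepancySq_discreteMeasure {K : α → α → ℝ} (hK : ∀ a t, K a t = K t a) {μ : Measure α}
    {x : κ → α} (hintegrable : ∀ i, Integrable (K (x i)) μ) (w : κ → ℝ≥0) :
    discrepancySq K μ (discreteMeasure x w) =
      (∫ a, ∫ t, K a t ∂μ ∂μ) - 2 * ∑ i, (w i : ℝ) * ∫ t, K (x i) t ∂μ
        + ∑ i, ∑ k, (w i : ℝ) * w k * K (x i) (x k) := by
  have hcross : ∫ a, ∫ t, K a t ∂discreteMeasure x w ∂μ = ∑ i, (w i : ℝ) * ∫ t, K (x i) t ∂μ := by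
    simp only [integral_discreteMeasure, smul_eq_mul, hK _ (x _)]
    rw [integral_finsetSum _ fun i _ => (hintegrable i).const_mul _]
    simp only [integral_const_mul]
  rw [discrepancySq, hcross]
  simp only [integral_discreteMeasure, smul_eq_mul, Finset.mul_sum _ _ (w _ : ℝ), mul_assoc]
  ring

end DiscreteMeasure

section ProductKernel

variable {ι : Type*} [Fintype ι] {X : ι → Type*} [∀ j, MeasurableSpace (X j)]
  {μ : ∀ j, Measure (X j)} [∀ j, SigmaFinite (μ j)]

lemma integral_integral_prod_pi (k : ∀ j, X j → X j → ℝ) :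
    ∫ a, ∫ t, ∏ j, k j (a j) (t j) ∂Measure.pi μ ∂Measure.pi μ
      = ∏ j, ∫ a, ∫ t, k j a t ∂μ j ∂μ j := by
  simp only [integral_fintype_prod_eq_prod fun j => k j (_ : X j)]
  exact integral_fintype_prod_eq_prod fun j a => ∫ t, k j a t ∂μ j

theorem discrepancySq_pi_discreteMeasure [∀ j, MeasurableSingletonClass (X j)]
    {κ : Type*} [Fintype κ] {k : ∀ j, X j → X j → ℝ} (hk : ∀ j a t, k j a t = k j t a)
    {x : κ → ∀ j, X j} (hintegrable : ∀ i j, Integrable (k j (x i j)) (μ j)) (w : κ → ℝ≥0) :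
    discrepancySq (fun a t => ∏ j, k j (a j) (t j)) (Measure.pi μ) (discreteMeasure x w) =
      (∏ j, ∫ a, ∫ t, k j a t ∂μ j ∂μ j)
        - 2 * ∑ i, (w i : ℝ) * ∏ j, ∫ t, k j (x i j) t ∂μ j
        + ∑ i, ∑ l, (w i : ℝ) * w l * ∏ j, k j (x i j) (x l j) := by
  rw [discrepancySq_discreteMeasure (fun a t => Finset.prod_congr rfl fun j _ => hk j _ _)
    (fun i => Integrable.fintype_prod_dep (hintegrable i)), integral_integral_prod_pi]
  simp only [integral_fintype_prod_eq_prod fun j => k j (x _ j)]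

end ProductKernel

section Uniform

open ProbabilityTheory

lemma pi_cond {ι : Type*} [Fintype ι] {X : ι → Type*} [∀ j, MeasurableSpace (X j)]
    (μ : ∀ j, Measure (X j)) [∀ j, SigmaFinite (μ j)] {s : ∀ j, Set (X j)}
    (hs : ∀ j, MeasurableSet (s j)) (hμs : ∀ j, μ j (s j) ≠ ∞) :
    Measure.pi (fun j => (μ j)[|s j]) = (Measure.pi μ)[|Set.univ.pi s] := by
  refine Measure.pi_eq fun t _ => ?_
  rw [cond_apply (.univ_pi hs), ← Set.pi_inter_distrib, Measure.pi_pi, Measure.pi_pi,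
    ENNReal.prod_inv_distrib fun _ _ j _ _ => .inr (hμs j), ← Finset.prod_mul_distrib]
  exact Finset.prod_congr rfl fun j _ => (cond_apply (hs j) _ _).symm

lemma integral_cond_Icc {E : Type*} [NormedAddCommGroup E] [NormedSpace ℝ E] {a b : ℝ}
    (hab : a ≤ b) (f : ℝ → E) :
    ∫ t, f t ∂volume[|Set.Icc a b] = (b - a)⁻¹ • ∫ t in a..b, f t := by
  rw [ProbabilityTheory.cond, integral_smul_measure, integral_Icc_eq_integral_Ioc,
    intervalIntegral.integral_of_le hab, Real.volume_Icc, ENNReal.toReal_inv,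
    ENNReal.toReal_ofReal (sub_nonneg.2 hab)]

/-- The uniform distribution `F_unif` on the cube `[-1,1]^ι`. -/
noncomputable def uniformCube (ι : Type*) [Fintype ι] : Measure (ι → ℝ) :=
  volume[|Set.univ.pi fun _ => Set.Icc (-1) 1]

lemma uniformCube_eq_smul_restrict (ι : Type*) [Fintype ι] :
    uniformCube ι = ((2 : ℝ≥0∞) ^ Fintype.card ι)⁻¹ •
      volume.restrict (Set.univ.pi fun _ : ι => Set.Icc (-1 : ℝ) 1) := by
  rw [uniformCube, ProbabilityTheory.cond, volume_pi_pi]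
  norm_num

lemma uniformCube_eq_pi (ι : Type*) [Fintype ι] :
    uniformCube ι = Measure.pi fun _ => volume[|Set.Icc (-1) 1] :=
  (pi_cond _ (fun _ => measurableSet_Icc) fun _ => measure_Icc_lt_top.ne).symm

end Uniform

lemma integral_abs_sub_of_mem_Icc {a b c : ℝ} (hc : c ∈ Set.Icc a b) :
    ∫ t in a..b, |c - t| = ((c - a) ^ 2 + (b - c) ^ 2) / 2 := by
  have hcont : Continuous fun t : ℝ => |c - t| := by fun_prop
  have hleft : ∫ t in a..c, |c - t| = ∫ t in a..c, (c - t) := by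
    refine intervalIntegral.integral_congr fun t ht => ?_
    rw [Set.uIcc_of_le hc.1] at ht
    exact abs_of_nonneg (sub_nonneg.2 ht.2)
  have hright : ∫ t in c..b, |c - t| = ∫ t in c..b, (t - c) := by
    refine intervalIntegral.integral_congr fun t ht => ?_
    rw [Set.uIcc_of_le hc.2] at ht
    simpa using abs_of_nonpos (sub_nonpos.2 ht.1)
  rw [← intervalIntegral.integral_add_adjacent_intervals (hcont.intervalIntegrable a c)
    (hcont.intervalIntegrable c b), hleft, hright,
    intervalIntegral.integral_sub (by simp) (by simp),
    intervalIntegral.integral_sub (by simp) (by simp)]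
  simp only [intervalIntegral.integral_const, integral_id, smul_eq_mul]
  ring

/-- The one-dimensional factor of the kernel `K_d`; it equals `1 + min |a| |t|` if `a` and `t` have
the same sign, and `1` otherwise. -/
noncomputable def centeredKernel (a t : ℝ) : ℝ :=
  1 + (|a| + |t| - |a - t|) / 2

lemma centeredKernel_comm (a t : ℝ) : centeredKernel a t = centeredKernel t a := by
  rw [centeredKernel, centeredKernel, abs_sub_comm, add_comm |a|]

section CenteredKernel

open ProbabilityTheory

lemma integrable_centeredKernel (a : ℝ) :
    Integrable (centeredKernel a) volume[|Set.Icc (-1) 1] := by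
  have hcont : Continuous (centeredKernel a) := by unfold centeredKernel; fun_prop
  exact hcont.continuousOn.integrableOn_compact isCompact_Icc |>.smul_measure (by simp)

lemma integral_abs_neg_one_one : ∫ t in (-1 : ℝ)..1, |t| = 1 := by
  simpa using integral_abs_sub_of_mem_Icc (a := -1) (b := 1) (c := 0) (by norm_num)

lemma integral_centeredKernel {a : ℝ} (ha : a ∈ Set.Icc (-1 : ℝ) 1) :
    ∫ t, centeredKernel a t ∂volume[|Set.Icc (-1) 1] = (2 + |a| - a ^ 2 / 2) / 2 := by
  have hcont_int {f : ℝ → ℝ} (hf : Continuous f) : IntervalIntegrable f volume (-1) 1 :=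
    hf.intervalIntegrable _ _
  rw [integral_cond_Icc (by norm_num)]
  simp only [centeredKernel]
  rw [intervalIntegral.integral_add (hcont_int (by fun_prop)) (hcont_int (by fun_prop)),
    intervalIntegral.integral_div,
    intervalIntegral.integral_sub (hcont_int (by fun_prop)) (hcont_int (by fun_prop)),
    intervalIntegral.integral_add (hcont_int (by fun_prop)) (hcont_int (by fun_prop)),
    integral_abs_sub_of_mem_Icc ha, integral_abs_neg_one_one]
  simp only [intervalIntegral.integral_const, smul_eq_mul]
  ring

lemma integral_integral_centeredKernel :
    ∫ a, ∫ t, centeredKernel a t ∂volume[|Set.Icc (-1) 1] ∂volume[|Set.Icc (-1) 1] = 7 / 6 := by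
  have hcont_int {f : ℝ → ℝ} (hf : Continuous f) : IntervalIntegrable f volume (-1) 1 :=
    hf.intervalIntegrable _ _
  rw [integral_congr_ae ((ae_cond_mem measurableSet_Icc).mono fun a => integral_centeredKernel),
    integral_cond_Icc (by norm_num), intervalIntegral.integral_div,
    intervalIntegral.integral_sub (hcont_int (by fun_prop)) (hcont_int (by fun_prop)),
    intervalIntegral.integral_add (hcont_int (by fun_prop)) (hcont_int (by fun_prop)),
    integral_abs_neg_one_one, intervalIntegral.integral_div, integral_pow]
  simp only [intervalIntegral.integral_const, smul_eq_mul]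
  norm_num

end CenteredKernel

theorem uniform_discrepancy_sq_closed_form_general {ι κ : Type*} [Fintype ι] [Nonempty ι]
    [Fintype κ] {x : κ → ι → ℝ} (hx : ∀ i, x i ∈ Set.univ.pi fun _ => Set.Icc (-1 : ℝ) 1)
    (w : κ → ℝ≥0) :
    discrepancySq (fun a t => ∏ j, centeredKernel (a j) (t j)) (uniformCube ι)
        (discreteMeasure x w)
      = (7 / 6 : ℝ) ^ Fintype.card ι
        - 1 / 2 ^ (Fintype.card ι - 1) *
            ∑ i, (w i : ℝ) * ∏ j, (2 + |x i j| - x i j ^ 2 / 2)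
        + ∑ i, ∑ k, (w i : ℝ) * w k * ∏ j, centeredKernel (x i j) (x k j) := by
  have hpow : (2 : ℝ) ^ Fintype.card ι = 2 ^ (Fintype.card ι - 1) * 2 :=
    (pow_sub_one_mul Fintype.card_ne_zero 2).symm
  rw [uniformCube_eq_pi, discrepancySq_pi_discreteMeasure (fun _ => centeredKernel_comm)
    fun _ _ => integrable_centeredKernel _]
  simp only [integral_integral_centeredKernel, integral_centeredKernel (hx _ _ (Set.mem_univ _)),
    Finset.prod_div_distrib _ (fun _ => (2 : ℝ)), Finset.prod_const, Finset.card_univ,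
    ← mul_div_assoc, ← Finset.sum_div, hpow]
  ring

/-- closed form for the squared uniform discrepancy
`D²(ξ; F_unif)` on `[-1,1]^d` under the kernel
`K_d(x,t) = ∏_j (1 + (|x_j|+|t_j|-|x_j-t_j|)/2)`, where the squared discrepancy
`∫∫ K_d d(F_unif − F_ξ) d(F_unif − F_ξ)` is written out bilinearly. -/
theorem uniform_discrepancy_sq_closed_form
    (d : ℕ) (hd : 0 < d)
    (m : ℕ) (x : Fin m → Fin d → ℝ)
    (hx : ∀ i, x i ∈ Set.univ.pi fun _ : Fin d => Set.Icc (-1 : ℝ) 1)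
    (nn : Fin m → ℕ) (hnn : ∀ i, 0 < nn i)
    (n : ℕ) (hn : n = ∑ i, nn i)
    (K : (Fin d → ℝ) → (Fin d → ℝ) → ℝ)
    (hK : K = fun a t => ∏ j, (1 + (|a j| + |t j| - |a j - t j|) / 2))
    (μ ν : Measure (Fin d → ℝ))
    (hμ : μ = ((2 : ℝ≥0∞) ^ d)⁻¹ •
      volume.restrict (Set.univ.pi fun _ : Fin d => Set.Icc (-1 : ℝ) 1))
    (hν : ν = ((n : ℝ≥0∞))⁻¹ • ∑ i, (nn i : ℝ≥0∞) • Measure.dirac (x i)) :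
    (∫ a, ∫ t, K a t ∂μ ∂μ) - (∫ a, ∫ t, K a t ∂ν ∂μ) - (∫ a, ∫ t, K a t ∂μ ∂ν)
        + (∫ a, ∫ t, K a t ∂ν ∂ν)
      = (7 / 6 : ℝ) ^ d
        - (1 / (2 ^ (d - 1) * n)) *
            ∑ i, (nn i : ℝ) * ∏ j, (2 + |x i j| - (x i j) ^ 2 / 2)
        + (1 / (n : ℝ) ^ 2) *
            ∑ i, ∑ k, (nn i : ℝ) * (nn k : ℝ) *
              ∏ j, (1 + (|x i j| + |x k j| - |x i j - x k j|) / 2) := by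
  have : Nonempty (Fin d) := Fin.pos_iff_nonempty.1 hd
  have hμ_cube : μ = uniformCube (Fin d) := by
    rw [hμ, uniformCube_eq_smul_restrict, Fintype.card_fin]
  have hν_discrete : ν = discreteMeasure x fun i => (nn i / n : ℝ≥0) := by
    simpa [hν, hn, discreteMeasure] using
      (discreteMeasure_div_sum x fun i => (nn i : ℝ≥0)).symm
  have hclosed := uniform_discrepancy_sq_closed_form_general hx fun i => (nn i / n : ℝ≥0)
  rw [← hμ_cube, ← hν_discrete, Fintype.card_fin] at hclosed
  subst hK
  refine hclosed.trans ?_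
  simp only [centeredKernel, Finset.mul_sum, NNReal.coe_div, NNReal.coe_natCast]
  congr! 3 <;> ring
end

section
/- For every x ∈ [−1,1], ∫_{−1}^{1} (1 + (|t| + |x| − |t − x|)/2) · (1/(π√(1−t²))) dt = 1 + 1/π + |x|/2 − (1/π)(x·arcsin(x) + √(1−x²)). -/
open Real

/-!
Under `t = cos θ` the arcsine law on `[-1, 1]` is the uniform law on `[0, π]`, so its moment
`∫ |t - x|` becomes the elementary integral of `|cos θ - cos α| / π` with `α = arccos x`, in which
the sign of `cos θ - cos α` changes exactly at `θ = α`. The kernel is affine in `|t|` and `|t - x|`,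
so its integral follows from the moments at `0` and `x`.
-/

open MeasureTheory Polynomial.Chebyshev

/-- The reproducing kernel `K₁(x, t)` whose integrals against a distribution make up its
one-dimensional discrepancy. -/
noncomputable def discrepancyKernel (x t : ℝ) : ℝ :=
  1 + (|t| + |x| - |t - x|) / 2

theorem integral_discrepancyKernel {μ : Measure ℝ} [IsProbabilityMeasure μ]
    (hμ : Integrable (fun t ↦ t) μ) (x : ℝ) :
    ∫ t, discrepancyKernel x t ∂μ = 1 + (∫ t, |t| ∂μ + |x| - ∫ t, |t - x| ∂μ) / 2 := by
  have habs : Integrable (fun t ↦ |t|) μ := hμ.abs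
  have hsub : Integrable (fun t ↦ |t - x|) μ := (hμ.sub (integrable_const x)).abs
  have hadd : Integrable (fun t ↦ |t| + |x|) μ := habs.add (integrable_const _)
  have hhalf : Integrable (fun t ↦ (|t| + |x| - |t - x|) / 2) μ := (hadd.sub hsub).div_const 2
  simp only [discrepancyKernel]
  rw [integral_add (integrable_const _) hhalf, integral_div, integral_sub hadd hsub,
    integral_add habs (integrable_const _)]
  simp only [integral_const, probReal_univ, one_smul]

/-- The arcsine distribution on `[-1, 1]`, obtained by normalizing the orthogonality measure of the
Chebyshev polynomials of the first kind. -/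
noncomputable def arcsineMeasure : Measure ℝ :=
  ENNReal.ofReal π⁻¹ • measureT

theorem integral_arcsineMeasure_eq_inv_pi_mul (f : ℝ → ℝ) :
    ∫ t, f t ∂arcsineMeasure = π⁻¹ * ∫ t, f t ∂measureT := by
  rw [arcsineMeasure, integral_smul_measure, ENNReal.toReal_ofReal (by positivity), smul_eq_mul]

theorem integral_arcsineMeasure (f : ℝ → ℝ) :
    ∫ t, f t ∂arcsineMeasure = ∫ t in (-1 : ℝ)..1, f t * (1 / (π * √(1 - t ^ 2))) := by
  rw [integral_arcsineMeasure_eq_inv_pi_mul, integral_measureT,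
    ← intervalIntegral.integral_const_mul]
  refine intervalIntegral.integral_congr fun t _ ↦ ?_
  simp only [sqrt_inv, one_div, mul_inv]
  ring

theorem integral_arcsineMeasure_eq_integral_cos (f : ℝ → ℝ) :
    ∫ t, f t ∂arcsineMeasure = π⁻¹ * ∫ θ in 0..π, f (cos θ) := by
  rw [integral_arcsineMeasure_eq_inv_pi_mul, integral_measureT_eq_integral_cos]

theorem integrable_arcsineMeasure {f : ℝ → ℝ} (hf : ContinuousOn f (Set.Icc (-1) 1)) :
    Integrable f arcsineMeasure :=
  (integrable_measureT hf).smul_measure ENNReal.ofReal_ne_top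

instance : IsProbabilityMeasure arcsineMeasure := by
  rw [isProbabilityMeasure_iff_real]
  calc arcsineMeasure.real Set.univ = ∫ _, (1 : ℝ) ∂arcsineMeasure := by simp
    _ = π⁻¹ * ∫ _ in 0..π, (1 : ℝ) := integral_arcsineMeasure_eq_integral_cos _
    _ = 1 := by simp [pi_ne_zero]

theorem integral_abs_cos_sub_cos {α : ℝ} (hα : α ∈ Set.Icc 0 π) :
    ∫ θ in 0..π, |cos θ - cos α| = 2 * ((π / 2 - α) * cos α + sin α) := by
  have hint (a b : ℝ) : IntervalIntegrable (fun θ ↦ |cos θ - cos α|) volume a b :=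
    Continuous.intervalIntegrable (by fun_prop) a b
  have hleft : ∫ θ in 0..α, |cos θ - cos α| = ∫ θ in 0..α, (cos θ - cos α) := by
    refine intervalIntegral.integral_congr fun θ hθ ↦ abs_of_nonneg (sub_nonneg.2 ?_)
    rw [Set.uIcc_of_le hα.1] at hθ
    exact cos_le_cos_of_nonneg_of_le_pi hθ.1 hα.2 hθ.2
  have hright : ∫ θ in α..π, |cos θ - cos α| = ∫ θ in α..π, (cos α - cos θ) := by
    refine intervalIntegral.integral_congr fun θ hθ ↦ ?_
    rw [Set.uIcc_of_le hα.2] at hθ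
    have hcos : cos θ ≤ cos α := cos_le_cos_of_nonneg_of_le_pi hα.1 hθ.2 hθ.1
    exact (abs_of_nonpos (sub_nonpos.2 hcos)).trans (neg_sub _ _)
  calc ∫ θ in 0..π, |cos θ - cos α|
      = (∫ θ in 0..α, (cos θ - cos α)) + ∫ θ in α..π, (cos α - cos θ) := by
        rw [← hleft, ← hright, intervalIntegral.integral_add_adjacent_intervals (hint _ _)
          (hint _ _)]
    _ = (sin α - α * cos α) + ((π - α) * cos α + sin α) := by simp
    _ = 2 * ((π / 2 - α) * cos α + sin α) := by ring

theorem integral_abs_sub_arcsineMeasure {x : ℝ} (hx : x ∈ Set.Icc (-1 : ℝ) 1) :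
    ∫ t, |t - x| ∂arcsineMeasure = 2 / π * (x * arcsin x + √(1 - x ^ 2)) := by
  have hcos : cos (arccos x) = x := cos_arccos hx.1 hx.2
  calc ∫ t, |t - x| ∂arcsineMeasure
      = π⁻¹ * ∫ θ in 0..π, |cos θ - cos (arccos x)| := by
        rw [integral_arcsineMeasure_eq_integral_cos, hcos]
    _ = π⁻¹ * (2 * ((π / 2 - arccos x) * x + √(1 - x ^ 2))) := by
        rw [integral_abs_cos_sub_cos ⟨arccos_nonneg x, arccos_le_pi x⟩, hcos, sin_arccos]
    _ = 2 / π * (x * arcsin x + √(1 - x ^ 2)) := by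
        rw [arcsin_eq_pi_div_two_sub_arccos]
        ring

theorem integral_abs_arcsineMeasure : ∫ t, |t| ∂arcsineMeasure = 2 / π := by
  simpa using integral_abs_sub_arcsineMeasure (x := 0) (by simp)

/-- single integral of the kernel `K₁(x,t) = 1 + (|t|+|x|-|t-x|)/2`
against the arcsine distribution on `[-1,1]`. -/
theorem kernel_integral_arcsine_one_dim (x : ℝ) (hx : x ∈ Set.Icc (-1 : ℝ) 1) :
    (∫ t in (-1 : ℝ)..1,
        (1 + (|t| + |x| - |t - x|) / 2) * (1 / (π * Real.sqrt (1 - t ^ 2))))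
      = 1 + 1 / π + |x| / 2 - (1 / π) * (x * Real.arcsin x + Real.sqrt (1 - x ^ 2)) := by
  calc ∫ t in (-1 : ℝ)..1, discrepancyKernel x t * (1 / (π * √(1 - t ^ 2)))
      = ∫ t, discrepancyKernel x t ∂arcsineMeasure := (integral_arcsineMeasure _).symm
    _ = 1 + (∫ t, |t| ∂arcsineMeasure + |x| - ∫ t, |t - x| ∂arcsineMeasure) / 2 :=
        integral_discrepancyKernel (integrable_arcsineMeasure continuousOn_id) x
    _ = 1 + (2 / π + |x| - 2 / π * (x * arcsin x + √(1 - x ^ 2))) / 2 := by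
        rw [integral_abs_arcsineMeasure, integral_abs_sub_arcsineMeasure hx]
    _ = 1 + 1 / π + |x| / 2 - 1 / π * (x * arcsin x + √(1 - x ^ 2)) := by ring
end
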